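/- Let n, k be positive integers with k ≡ 0 (mod 6), k ≥ 12, (n−2) ≡ 0 (mod k−2) and (n−1)(n−2) ≡ 2(k−2) (mod (k−1)(k−2)). Then D(n,k,3) ≤ J'(n,k,3) − ⌊n/(3k³)⌋, where J'(n,k,3) = ⌊(n/k)·(⌊(n−1)(n−2)/((k−1)(k−2))⌋ − 1)⌋. In particular, the gap J'(n,k,3) − D(n,k,3) grows linearly in n. -/

import Mathlib

/-- The packing number D(n,k,t): the maximum number of k-subsets of an n-set
such that every t-subset is contained in at most one of them. -/
noncomputable def packingNumber (n k t : ℕ) : ℕ :=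
  sSup {m | ∃ B : Finset (Finset (Fin n)),
    (∀ b ∈ B, b.card = k) ∧
    (∀ T : Finset (Fin n), T.card = t → (B.filter (fun b => T ⊆ b)).card ≤ 1) ∧
    B.card = m}

open Finset in
/-- Local structure: a closed cluster of good points cannot exist. -/
lemma local_contra {α : Type*} [Fintype α] [DecidableEq α] (k : ℕ) (hk : 12 ≤ k) (h6 : k % 6 = 0)
    (N : α → Finset α) (L : α → α → α → Prop) [∀ x y z, Decidable (L x y z)] (P : α → Prop)
    (hsymm : ∀ x y, y ∈ N x → x ∈ N y) (hirr : ∀ x, x ∉ N x)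
    (hrot : ∀ x y z, L x y z → L y z x)
    (hLN : ∀ x y z, L x y z → y ∈ N x)
    (hcard : ∀ x, P x → (N x).card = k + 1)
    (hcod : ∀ x, P x → ∀ y ∈ N x, (univ.filter (fun z => L x y z)).card = k - 2)
    (x : α) (hx : P x) (hx1 : ∀ y ∈ N x, P y) (hx2 : ∀ y ∈ N x, ∀ z ∈ N y, P z) : False := by
  have hint : ∀ y, P y → ∀ z ∈ N y, k - 2 ≤ (N y ∩ N z).card := by
    intro y hy z hz
    rw [← hcod y hy z hz]
    apply card_le_card
    intro w hw
    simp only [mem_filter, mem_univ, true_and] at hw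
    rw [mem_inter]
    exact ⟨hsymm _ _ (hLN _ _ _ (hrot _ _ _ (hrot _ _ _ hw))), hLN _ _ _ (hrot _ _ _ hw)⟩
  set D := (N x).biUnion N \ (insert x (N x)) with hD
  have hDmem : ∀ z ∈ D, (∃ y ∈ N x, z ∈ N y) ∧ z ≠ x ∧ z ∉ N x := by
    intro z hz
    simpa [hD] using hz
  have hout : ∀ y ∈ N x, (N y ∩ D).card ≤ 2 := by
    intro y hy
    have h1 := hint y (hx1 y hy) x (hsymm _ _ hy)
    have h2 : (insert x (N y ∩ N x) ∪ (N y ∩ D)).card ≤ (N y).card := by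
      apply card_le_card
      intro w hw
      simp only [mem_union, mem_insert, mem_inter] at hw
      rcases hw with (rfl | hw) | hw
      · exact hsymm _ _ hy
      · exact hw.1
      · exact hw.1
    rw [card_union_of_disjoint, card_insert_of_notMem, hcard y (hx1 y hy)] at h2
    · omega
    · simp [hirr]
    · rw [disjoint_left]
      intro w hw hw2
      have := hDmem w (mem_inter.1 hw2).2
      simp only [mem_insert, mem_inter] at hw
      tauto
  have hin : ∀ z ∈ D, k - 3 ≤ (N z ∩ N x).card := by
    intro z hz
    obtain ⟨⟨y, hy, hzy⟩, hzx, hzn⟩ := hDmem z hz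
    have hPy := hx1 y hy
    have h1 := hint y hPy x (hsymm _ _ hy)
    have h2 := hint y hPy z hzy
    have hxy := hsymm _ _ hy
    have h3 : (N y ∩ N x ∪ N y ∩ N z).card ≤ (((N y).erase x).erase z).card := by
      apply card_le_card
      intro w hw
      simp only [mem_union, mem_inter] at hw
      simp only [mem_erase]
      refine ⟨?_, ?_, by tauto⟩
      · rintro rfl
        rcases hw with hw | hw
        · exact hzn hw.2
        · exact hirr _ hw.2
      · rintro rfl
        rcases hw with hw | hw
        · exact hirr _ hw.2
        · exact hzn (hsymm _ _ hw.2)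
    rw [card_erase_of_mem (by simp [hzx, hzy]), card_erase_of_mem hxy, hcard y hPy] at h3
    have h4 := card_union_add_card_inter (N y ∩ N x) (N y ∩ N z)
    have h5 : (N y ∩ N x ∩ (N y ∩ N z)).card ≤ (N z ∩ N x).card := by
      apply card_le_card
      intro w hw
      simp only [mem_inter] at hw ⊢
      tauto
    omega
  have hDcard : D.card ≤ 2 := by
    have h := card_mul_le_card_mul (s := D) (t := N x) (m := k - 3) (n := 2)
      (fun z y => y ∈ N z) ?_ ?_
    · rw [hcard x hx] at h
      by_contra hc
      have : 3 * (k - 3) ≤ D.card * (k - 3) := Nat.mul_le_mul_right _ (by omega)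
      omega
    · intro z hz
      refine (hin z hz).trans (card_le_card ?_)
      intro w hw
      simp only [mem_inter] at hw
      simp only [bipartiteAbove, mem_filter]
      tauto
    · intro y hy
      refine le_trans (card_le_card ?_) (hout y hy)
      intro w hw
      simp only [bipartiteBelow, mem_filter] at hw
      simp only [mem_inter]
      exact ⟨hsymm _ _ hw.2, hw.1⟩
  set V := insert x (N x) ∪ D with hV
  have hVcard : V.card = k + 2 + D.card := by
    rw [hV, card_union_of_disjoint, card_insert_of_notMem (hirr x), hcard x hx]
    exact disjoint_sdiff
  have hVmem : ∀ y ∈ N x, ∀ z ∈ N y, z ∈ V := by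
    intro y hy z hz
    by_cases h : z ∈ insert x (N x)
    · exact mem_union_left _ h
    · exact mem_union_right _ (mem_sdiff.2 ⟨mem_biUnion.2 ⟨y, hy, hz⟩, h⟩)
  have hVP : ∀ v ∈ V, P v := by
    intro v hv
    rcases mem_union.1 hv with hv | hv
    · rcases mem_insert.1 hv with rfl | hv
      · exact hx
      · exact hx1 v hv
    · obtain ⟨⟨y, hy, hzy⟩, _⟩ := hDmem v hv
      exact hx2 y hy v hzy
  have hVcl : ∀ v ∈ V, ∀ w ∈ N v, w ∈ V := by
    intro v hv w hw
    rcases mem_union.1 hv with hv' | hv'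
    · rcases mem_insert.1 hv' with rfl | hv'
      · exact mem_union_left _ (mem_insert_of_mem hw)
      · exact hVmem v hv' w hw
    · by_contra hwV
      have h1 := hin v hv'
      have h2 := hint v (hVP v hv) w hw
      have h3 : (N v ∩ N x ∪ N v ∩ N w).card ≤ (N v).card := by
        apply card_le_card
        intro u hu
        simp only [mem_union, mem_inter] at hu
        tauto
      rw [card_union_of_disjoint, hcard v (hVP v hv)] at h3
      · omega
      · rw [disjoint_left]
        intro u hu hu2
        exact hwV (hVmem u (mem_inter.1 hu).2 w (hsymm _ _ (mem_inter.1 hu2).2))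
  -- pairs
  have hpairs : 2 ∣ V.card * (k + 1) := by
    let S := V.sigma N
    have hS : Fintype.card {p : α × α // p.1 ∈ V ∧ p.2 ∈ N p.1} = V.card * (k + 1) := by
      rw [Fintype.card_subtype]
      have : (univ.filter fun p : α × α => p.1 ∈ V ∧ p.2 ∈ N p.1).card = (V.sigma N).card := by
        refine card_bij' (fun p _ => ⟨p.1, p.2⟩) (fun p _ => (p.1, p.2)) ?_ ?_ ?_ ?_ <;> simp
      rw [this, card_sigma, sum_congr rfl (fun v hv => hcard v (hVP v hv))]
      simp
    let f : Function.End {p : α × α // p.1 ∈ V ∧ p.2 ∈ N p.1} := fun p =>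
      ⟨(p.1.2, p.1.1), hVcl _ p.2.1 _ p.2.2, hsymm _ _ p.2.2⟩
    have hf : f ^ 2 ^ 1 = 1 := by
      funext p
      rfl
    have : Fact (Nat.Prime 2) := ⟨Nat.prime_two⟩
    have := Equiv.Perm.card_fixedPoints_modEq hf
    rw [hS] at this
    have h0 : Fintype.card (Function.fixedPoints f) = 0 := by
      rw [Fintype.card_eq_zero_iff]
      constructor
      rintro ⟨⟨⟨a, b⟩, h1, h2⟩, h3⟩
      simp only [Function.mem_fixedPoints, Function.IsFixedPt, f, Subtype.mk.injEq,
        Prod.mk.injEq] at h3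
      rw [h3.1] at h2
      exact hirr _ h2
    rw [h0] at this
    exact (Nat.modEq_zero_iff_dvd).1 this
  have htrip : 3 ∣ V.card * ((k + 1) * (k - 2)) := by
    have hS : Fintype.card {p : α × α × α // p.1 ∈ V ∧ L p.1 p.2.1 p.2.2}
        = V.card * ((k + 1) * (k - 2)) := by
      rw [Fintype.card_subtype]
      have : (univ.filter fun p : α × α × α => p.1 ∈ V ∧ L p.1 p.2.1 p.2.2).card
          = (V.sigma (fun v => (N v).sigma (fun y => univ.filter (fun z => L v y z)))).card := by
        refine card_bij' (fun p _ => ⟨p.1, p.2.1, p.2.2⟩)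
          (fun p _ => (p.1, p.2.1, p.2.2)) ?_ ?_ ?_ ?_
        · rintro ⟨a, b, c⟩ h
          simp only [mem_filter, mem_univ, true_and, mem_sigma] at h ⊢
          exact ⟨h.1, hLN _ _ _ h.2, h.2⟩
        · rintro ⟨a, b, c⟩ h
          simp only [mem_filter, mem_univ, true_and, mem_sigma] at h ⊢
          exact ⟨h.1, h.2.2⟩
        · intros; rfl
        · intros; rfl
      rw [this, card_sigma, sum_congr rfl (g := fun _ => (k + 1) * (k - 2))]
      · simp
      · intro v hv
        rw [card_sigma, sum_congr rfl (fun y hy => hcod v (hVP v hv) y hy)]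
        simp [hcard v (hVP v hv)]
    let f : Function.End {p : α × α × α // p.1 ∈ V ∧ L p.1 p.2.1 p.2.2} := fun p =>
      ⟨(p.1.2.1, p.1.2.2, p.1.1), hVcl _ p.2.1 _ (hLN _ _ _ p.2.2), hrot _ _ _ p.2.2⟩
    have hf : f ^ 3 ^ 1 = 1 := by
      funext p
      rfl
    have : Fact (Nat.Prime 3) := ⟨Nat.prime_three⟩
    have := Equiv.Perm.card_fixedPoints_modEq hf
    rw [hS] at this
    have h0 : Fintype.card (Function.fixedPoints f) = 0 := by
      rw [Fintype.card_eq_zero_iff]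
      constructor
      rintro ⟨⟨⟨a, b, c⟩, h1, h2⟩, h3⟩
      simp only [Function.mem_fixedPoints, Function.IsFixedPt, f, Subtype.mk.injEq,
        Prod.mk.injEq] at h3
      have := hLN _ _ _ h2
      simp only at this
      rw [h3.1] at this
      exact hirr _ this
    rw [h0] at this
    exact (Nat.modEq_zero_iff_dvd).1 this
  rw [hVcard] at hpairs htrip
  obtain ⟨q, rfl⟩ : ∃ q, k = 6 * q := ⟨k / 6, by omega⟩
  have hq : 6 * q - 2 = 6 * (q - 1) + 4 := by omega
  rw [hq] at htrip
  generalize q - 1 = t at htrip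
  generalize D.card = e at *
  rw [Nat.dvd_iff_mod_eq_zero] at hpairs htrip
  interval_cases e <;> simp [Nat.mul_mod, Nat.add_mod] at hpairs htrip

open Finset in
lemma abstract_bound {α : Type*} [Fintype α] [DecidableEq α] (k r : ℕ) (hk : 12 ≤ k)
    (h6 : k % 6 = 0)
    (L : α → α → α → Prop) [∀ x y z, Decidable (L x y z)] (d : α → α → ℕ) (deg : α → ℕ)
    (hrot : ∀ x y z, L x y z → L y z x)
    (hswap : ∀ x y z, L x y z → L x z y)
    (hd0 : ∀ x, d x x = 0) (hds : ∀ x y, d x y = d y x)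
    (hcod : ∀ x y, (univ.filter (fun z => L x y z)).card = d x y * (k - 2))
    (hsum : ∀ x, ∑ y, d x y + deg x * (k - 1) = r * (k - 1) + 2) :
    ∃ j : α → ℕ, (∀ x, deg x + 1 + j x = r) ∧ Fintype.card α ≤ 3 * k ^ 2 * ∑ x, j x := by
  have hLd : ∀ x y z, L x y z → 1 ≤ d x y := by
    intro x y z h
    by_contra hc
    have h0 : d x y = 0 := by omega
    have := hcod x y
    rw [h0, zero_mul, card_eq_zero] at this
    have hz : z ∈ univ.filter (fun z => L x y z) := by simpa using h
    rw [this] at hz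
    simp at hz
  -- sum is at least
  have hlow : ∀ x y, d x y + d x y * (k - 2) ≤ ∑ z, d x z := by
    intro x y
    have hny : y ∉ univ.filter (fun z => L x y z) := by
      intro h
      simp only [mem_filter, mem_univ, true_and] at h
      have := hLd _ _ _ (hrot _ _ _ h)
      rw [hd0] at this
      omega
    calc d x y + d x y * (k - 2) = d x y + ∑ z ∈ univ.filter (fun z => L x y z), 1 := by
          rw [← hcod]; simp
      _ ≤ d x y + ∑ z ∈ univ.filter (fun z => L x y z), d x z := by
          gcongr with z hz
          simp only [mem_filter, mem_univ, true_and] at hz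
          exact hLd _ _ _ (hswap _ _ _ hz)
      _ = ∑ z ∈ insert y (univ.filter (fun z => L x y z)), d x z := by
          rw [sum_insert hny]
      _ ≤ ∑ z, d x z := sum_le_sum_of_subset (subset_univ _)
  have hj : ∀ x, ∃ j, deg x + 1 + j = r ∧ ∑ y, d x y = k + 1 + j * (k - 1) := by
    intro x
    have hs := hsum x
    have h1 : deg x ≤ r := by
      by_contra hc
      have : (r + 1) * (k - 1) ≤ deg x * (k - 1) := Nat.mul_le_mul_right _ (by omega)
      rw [add_mul] at this
      omega
    have h2 : deg x ≠ r := by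
      intro h
      rw [h] at hs
      have h2 : ∑ y, d x y = 2 := by omega
      have : ∃ y ∈ univ, d x y ≠ 0 := by
        apply exists_ne_zero_of_sum_ne_zero
        omega
      obtain ⟨y, _, hy⟩ := this
      have := hlow x y
      have h3 : 1 * (k - 2) ≤ d x y * (k - 2) := Nat.mul_le_mul_right _ (by omega)
      omega
    obtain ⟨j, hj⟩ := Nat.exists_eq_add_of_lt (lt_of_le_of_ne h1 h2)
    refine ⟨j, by omega, ?_⟩
    rw [hj, add_mul, add_mul] at hs
    omega
  choose j hj1 hj2 using hj
  refine ⟨j, hj1, ?_⟩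
  set N : α → Finset α := fun x => univ.filter (fun y => d x y ≠ 0) with hN
  have hNmem : ∀ x y, y ∈ N x ↔ d x y ≠ 0 := by intro x y; simp [hN]
  have hsymm : ∀ x y, y ∈ N x → x ∈ N y := by
    intro x y; rw [hNmem, hNmem, hds]; exact id
  have hsumN : ∀ x, ∑ y ∈ N x, d x y = ∑ y, d x y := by
    intro x
    rw [hN, sum_filter_ne_zero]
  have hle1 : ∀ x, j x = 0 → ∀ y, d x y ≤ 1 := by
    intro x hx y
    by_contra hc
    have := hlow x y
    have h3 : 2 * (k - 2) ≤ d x y * (k - 2) := Nat.mul_le_mul_right _ (by omega)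
    rw [hj2, hx] at this
    omega
  have hcard : ∀ x, j x = 0 → (N x).card = k + 1 := by
    intro x hx
    have h := hsumN x
    rw [hj2, hx, zero_mul, add_zero] at h
    rw [← h, card_eq_sum_ones]
    apply sum_congr rfl
    intro y hy
    have := hle1 x hx y
    have := (hNmem x y).1 hy
    omega
  have hbad : ∀ x, j x ≠ 0 → (N x).card ≤ 2 * k * j x := by
    intro x hx
    have h : (N x).card ≤ ∑ y ∈ N x, d x y := by
      rw [card_eq_sum_ones]
      apply sum_le_sum
      intro y hy
      have := (hNmem x y).1 hy
      omega
    rw [hsumN, hj2] at h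
    obtain ⟨i, hi⟩ := Nat.exists_eq_succ_of_ne_zero hx
    obtain ⟨l, rfl⟩ : ∃ l, k = l + 1 := ⟨k - 1, by omega⟩
    simp only [Nat.add_sub_cancel] at h
    rw [hi] at h ⊢
    simp only [Nat.succ_eq_add_one] at *
    nlinarith [Nat.zero_le (i * l)]
  set s := ∑ x, j x with hs
  set Bad := univ.filter (fun x => j x ≠ 0) with hBad
  have hBadsum : ∑ x ∈ Bad, j x = s := by
    rw [hBad, sum_filter_ne_zero]
  have hBc : Bad.card ≤ s := by
    rw [← hBadsum, card_eq_sum_ones]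
    apply sum_le_sum
    intro x hx
    simp [hBad] at hx
    omega
  have hT1 : (Bad.biUnion N).card ≤ 2 * k * s := by
    refine card_biUnion_le.trans ?_
    rw [← hBadsum, mul_sum]
    apply sum_le_sum
    intro x hx
    simp only [hBad, mem_filter] at hx
    exact hbad x hx.2
  have hT2 : ((Bad.biUnion N \ Bad).biUnion N).card ≤ 2 * k * s * (k + 1) := by
    refine (card_biUnion_le_card_mul _ _ (k + 1) ?_).trans ?_
    · intro x hx
      simp only [hBad, mem_sdiff, mem_filter, mem_univ, true_and, not_not] at hx
      rw [hcard x hx.2]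
    · exact Nat.mul_le_mul_right _ ((card_le_card sdiff_subset).trans hT1)
  have hcov : (univ : Finset α) ⊆
      Bad ∪ Bad.biUnion N ∪ (Bad.biUnion N \ Bad).biUnion N := by
    intro x _
    by_contra hc
    simp only [hBad, mem_union, mem_biUnion, mem_sdiff, mem_filter, mem_univ, true_and,
      not_or, not_not, not_exists, not_and] at hc
    obtain ⟨⟨hc1, hc2⟩, hc3⟩ := hc
    have hx1 : ∀ y ∈ N x, j y = 0 := by
      intro y hy
      by_contra h
      exact hc2 y h (hsymm _ _ hy)
    refine local_contra k hk h6 N L (fun x => j x = 0) hsymm ?_ hrot ?_ hcard ?_ x hc1 hx1 ?_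
    · intro x; rw [hNmem, hd0]; simp
    · intro x y z h
      rw [hNmem]
      have := hLd _ _ _ h
      omega
    · intro x hx y hy
      rw [hcod]
      have h1 := (hNmem x y).1 hy
      have h2 := hle1 x hx y
      have : d x y = 1 := by omega
      rw [this, one_mul]
    · intro y hy z hz
      by_contra h
      exact hc3 y ⟨⟨z, h, hsymm _ _ hz⟩, hx1 y hy⟩ (hsymm _ _ hy)
  have h1 := card_le_card hcov
  rw [card_univ] at h1
  have h2 := card_union_le (Bad ∪ Bad.biUnion N) ((Bad.biUnion N \ Bad).biUnion N)
  have h3 := card_union_le Bad (Bad.biUnion N)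
  have h4 : Fintype.card α ≤ s + 2 * k * s + 2 * k * s * (k + 1) := by omega
  refine h4.trans ?_
  have : 1 + 2 * k + 2 * k * (k + 1) ≤ 3 * k ^ 2 := by nlinarith
  calc s + 2 * k * s + 2 * k * s * (k + 1) = (1 + 2 * k + 2 * k * (k + 1)) * s := by ring
    _ ≤ _ := Nat.mul_le_mul_right _ this

open Finset in
lemma packing_bound (n k m r : ℕ) (hk : 12 ≤ k) (h6 : k % 6 = 0)
    (hn : n = 2 + m * (k - 2)) (hr : (n - 1) * m = r * (k - 1) + 2)
    (B : Finset (Finset (Fin n))) (hB : ∀ b ∈ B, b.card = k)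
    (hT : ∀ T : Finset (Fin n), T.card = 3 → (B.filter (fun b => T ⊆ b)).card ≤ 1) :
    B.card + n / (3 * k ^ 3) ≤ n * (r - 1) / k := by
  classical
  let L : Fin n → Fin n → Fin n → Prop := fun x y z =>
    x ≠ y ∧ x ≠ z ∧ y ≠ z ∧ ∀ b ∈ B, ¬ (x ∈ b ∧ y ∈ b ∧ z ∈ b)
  let cod : Fin n → Fin n → ℕ := fun x y => (B.filter (fun b => x ∈ b ∧ y ∈ b)).card
  let deg : Fin n → ℕ := fun x => (B.filter (fun b => x ∈ b)).card
  -- leave size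
  have hA : ∀ x y, x ≠ y →
      (univ.filter (fun z => L x y z)).card + cod x y * (k - 2) = n - 2 := by
    intro x y hxy
    have hU : ((B.filter (fun b => x ∈ b ∧ y ∈ b)).biUnion
        (fun b => (b.erase x).erase y)).card = cod x y * (k - 2) := by
      rw [card_biUnion]
      · rw [sum_congr rfl (g := fun _ => k - 2)]
        · simp [cod]
        · intro b hb
          simp only [mem_filter] at hb
          rw [card_erase_of_mem (by simp [hb.2.2, hxy.symm]), card_erase_of_mem hb.2.1, hB b hb.1]
          omega
      · intro b hb c hc hbc
        rw [Function.onFun, disjoint_left]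
        intro z hz hz2
        simp only [mem_erase, mem_coe, mem_filter] at hb hc hz hz2
        have h3 := hT {x, y, z} (by
          rw [card_eq_three]
          exact ⟨x, y, z, hxy, Ne.symm hz.2.1, Ne.symm hz.1, rfl⟩)
        rw [card_le_one] at h3
        apply hbc
        apply h3
        · simp only [mem_filter, insert_subset_iff, singleton_subset_iff]; tauto
        · simp only [mem_filter, insert_subset_iff, singleton_subset_iff]; tauto
    rw [← hU, ← card_union_of_disjoint]
    · have : (univ.filter (fun z => L x y z)) ∪ ((B.filter (fun b => x ∈ b ∧ y ∈ b)).biUnion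
        (fun b => (b.erase x).erase y)) = ((univ.erase x).erase y) := by
        ext z
        simp only [mem_union, mem_filter, mem_univ, true_and, mem_biUnion, mem_erase, L, and_true]
        constructor
        · rintro (h | ⟨b, _, h⟩)
          · exact ⟨h.2.2.1.symm, h.2.1.symm⟩
          · exact ⟨h.1, h.2.1⟩
        · rintro ⟨h1, h2⟩
          by_cases h : ∃ b ∈ B, x ∈ b ∧ y ∈ b ∧ z ∈ b
          · obtain ⟨b, hb, h⟩ := h
            exact Or.inr ⟨b, ⟨hb, h.1, h.2.1⟩, h1, h2, h.2.2⟩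
          · left
            refine ⟨hxy, h2.symm, h1.symm, ?_⟩
            intro b hb hh
            exact h ⟨b, hb, hh⟩
      rw [this, card_erase_of_mem (by simp [hxy.symm]), card_erase_of_mem (by simp)]
      simp
      omega
    · rw [disjoint_left]
      intro z hz hz2
      simp only [mem_filter, mem_univ, true_and, mem_biUnion, mem_erase, L] at hz hz2
      obtain ⟨b, hb, hz2⟩ := hz2
      exact hz.2.2.2 b hb.1 ⟨hb.2.1, hb.2.2, hz2.2.2⟩
  have hcodm : ∀ x y, x ≠ y → cod x y ≤ m := by
    intro x y hxy
    have h := hA x y hxy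
    have : cod x y * (k - 2) ≤ m * (k - 2) := by omega
    exact Nat.le_of_mul_le_mul_right this (by omega)
  have hBsum : ∀ x, ∑ y ∈ univ.erase x, cod x y = deg x * (k - 1) := by
    intro x
    have h := sum_card_bipartiteAbove_eq_sum_card_bipartiteBelow
      (s := univ.erase x) (t := B.filter (fun b => x ∈ b)) (fun y b => y ∈ b)
    calc ∑ y ∈ univ.erase x, cod x y
        = ∑ y ∈ univ.erase x,
          (bipartiteAbove (fun y b => y ∈ b) (B.filter (fun b => x ∈ b)) y).card := by
          apply sum_congr rfl
          intro y _
          simp only [cod, bipartiteAbove, filter_filter]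
      _ = _ := h
      _ = ∑ b ∈ B.filter (fun b => x ∈ b), (k - 1) := by
          apply sum_congr rfl
          intro b hb
          simp only [mem_filter] at hb
          rw [← hB b hb.1, ← card_erase_of_mem hb.2]
          congr 1
          ext y
          simp [bipartiteBelow]
      _ = _ := by simp [deg]
  have hCsum : ∑ x, deg x = B.card * k := by
    have h := sum_card_bipartiteAbove_eq_sum_card_bipartiteBelow
      (s := univ) (t := B) (fun (y : Fin n) b => y ∈ b)
    calc ∑ x, deg x = _ := rfl
      _ = _ := h
      _ = ∑ b ∈ B, k := by
          apply sum_congr rfl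
          intro b hb
          rw [← hB b hb]
          congr 1
          ext y
          simp [bipartiteBelow]
      _ = _ := by simp
  obtain ⟨j, hj1, hj2⟩ := abstract_bound k r hk h6 L
    (fun x y => if x = y then 0 else m - cod x y) deg
    (by
      rintro x y z ⟨h1, h2, h3, h4⟩
      exact ⟨h3, h1.symm, h2.symm, fun b hb hh => h4 b hb (by tauto)⟩)
    (by
      rintro x y z ⟨h1, h2, h3, h4⟩
      exact ⟨h2, h1, h3.symm, fun b hb hh => h4 b hb (by tauto)⟩)
    (by simp)
    (by
      intro x y
      have : cod x y = cod y x := by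
        simp only [cod, and_comm]
      simp only [this, eq_comm])
    (by
      intro x y
      by_cases hxy : x = y
      · simp [hxy, L]
      · have h := hA x y hxy
        simp only [if_neg hxy]
        rw [Nat.sub_mul]
        omega)
    (by
      intro x
      rw [← hBsum x, ← hr, ← add_sum_erase univ _ (mem_univ x)]
      simp only [if_true, zero_add]
      rw [← sum_add_distrib, sum_congr rfl (g := fun _ => m)]
      · simp
      · intro y hy
        have hxy : x ≠ y := by
          intro h; simp [h] at hy
        have := hcodm x y hxy
        rw [if_neg hxy]
        omega)
  have htot : B.card * k + ∑ x, j x = n * (r - 1) := by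
    rw [← hCsum, ← sum_add_distrib, sum_congr rfl (g := fun _ => r - 1)]
    · simp
    · intro x _
      have := hj1 x
      omega
  rw [Fintype.card_fin] at hj2
  rw [Nat.le_div_iff_mul_le (by omega), add_mul, ← htot]
  have h := Nat.div_mul_le_self n (3 * k ^ 3)
  have h5 : (3 * k ^ 2) * (n / (3 * k ^ 3) * k) ≤ 3 * k ^ 2 * ∑ x, j x := by
    refine le_trans (le_of_eq ?_) (h.trans hj2)
    ring
  have := Nat.le_of_mul_le_mul_left h5 (by positivity)
  omega

theorem stmt12 (n k : ℕ) (hn : 0 < n) (hk : 12 ≤ k) (h6 : k % 6 = 0)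
    (h1 : (k - 2) ∣ (n - 2))
    (h2 : (n - 1) * (n - 2) ≡ 2 * (k - 2) [MOD (k - 1) * (k - 2)]) :
    packingNumber n k 3 + n / (3 * k ^ 3) ≤
      n * ((n - 1) * (n - 2) / ((k - 1) * (k - 2)) - 1) / k := by
  have hlt : 2 * (k - 2) < (k - 1) * (k - 2) := Nat.mul_lt_mul_of_pos_right (by omega) (by omega)
  have hn2 : 2 ≤ n := by
    by_contra hc
    have : n = 1 := by omega
    subst this
    unfold Nat.ModEq at h2
    rw [Nat.mod_eq_of_lt hlt] at h2
    simp at h2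
    omega
  obtain ⟨m, hm⟩ := h1
  have hmod : (n - 1) * (n - 2) % ((k - 1) * (k - 2)) = 2 * (k - 2) := by
    rw [← Nat.mod_eq_of_lt hlt]; exact h2
  set r := (n - 1) * (n - 2) / ((k - 1) * (k - 2)) with hr
  have hdm := Nat.div_add_mod ((n - 1) * (n - 2)) ((k - 1) * (k - 2))
  rw [hmod, ← hr] at hdm
  have hrr : (n - 1) * m = r * (k - 1) + 2 := by
    have hpos : 0 < k - 2 := by omega
    apply Nat.eq_of_mul_eq_mul_left hpos
    rw [hm] at hdm
    linarith
  have key := packing_bound n k m r hk h6 (by rw [mul_comm, ← hm]; omega) hrr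
  have h0 := key ∅ (by simp) (by simp)
  simp only [Finset.card_empty, zero_add] at h0
  have : packingNumber n k 3 ≤ n * (r - 1) / k - n / (3 * k ^ 3) := by
    apply csSup_le
    · exact ⟨0, ∅, by simp, by simp, by simp⟩
    · rintro q ⟨B, hB, hT, rfl⟩
      have := key B hB hT
      omega
  omega
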